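/- arXiv:2302.13459 — 2 statements merged into one kernel-verified Lean document; each statement's English description precedes it below -/
import Mathlib

section
/- Let ρ = e^{2πi/3} ∈ ℍ. The Eisenstein series E4 has a simple zero at ρ, i.e. E4(ρ) = 0 and E4'(ρ) ≠ 0, and its derivatives satisfy E4''(ρ) = 10 · (1+ρ)/(1−ρ) · E4'(ρ). -/
open Complex Filter Topology

noncomputable section

/-- The nome `q = e^{2πiτ}`. -/
def qq (τ : ℂ) : ℂ := Complex.exp (2 * Real.pi * Complex.I * τ)

/-- The Eisenstein series `E₄(τ) = 1 + 240 Σ_{n≥1} σ₃(n) qⁿ`. -/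
def E4 (τ : ℂ) : ℂ := 1 + 240 * ∑' n : ℕ, (∑ d ∈ (n + 1).divisors, (d : ℂ) ^ 3) * qq τ ^ (n + 1)

/-- The Eisenstein series `E₆(τ) = 1 − 504 Σ_{n≥1} σ₅(n) qⁿ`. -/
def E6 (τ : ℂ) : ℂ := 1 - 504 * ∑' n : ℕ, (∑ d ∈ (n + 1).divisors, (d : ℂ) ^ 5) * qq τ ^ (n + 1)

/-- The normalized elliptic modular function `J = E₄³ / (E₄³ − E₆²)`. -/
def J (τ : ℂ) : ℂ := E4 τ ^ 3 / (E4 τ ^ 3 - E6 τ ^ 2)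

/-- The Dedekind eta function `η(τ) = e^{πiτ/12} ∏_{n≥1} (1 − qⁿ)`. -/
def dedekindEta (τ : ℂ) : ℂ := Complex.exp (Real.pi * Complex.I * τ / 12) * ∏' n : ℕ, (1 - qq τ ^ (n + 1))

/-- The elliptic point `ρ = e^{2πi/3}`. -/
def rho : ℂ := Complex.exp (2 * Real.pi * Complex.I / 3)

lemma isOpen_im_pos : IsOpen {z : ℂ | 0 < z.im} :=
  isOpen_lt continuous_const Complex.continuous_im

lemma E4_coe (z : UpperHalfPlane) : E4 z = ModularForm.E₄ z := by
  have hB : bernoulli 4 = -1 / 30 := by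
    rw [bernoulli_eq_bernoulli'_of_ne_one (by norm_num), bernoulli'_four]
  have h := EisensteinSeries.q_expansion_bernoulli (k := 4) (by norm_num) (by decide) z
  rw [h, E4, hB]
  simp_rw [zpow_natCast]
  rw [tsum_pnat_eq_tsum_succ (f := fun n ↦
    (ArithmeticFunction.sigma (4 - 1) n : ℂ) * cexp (2 * Real.pi * I * z) ^ n)]
  simp only [ArithmeticFunction.sigma_apply, qq]
  push_cast
  norm_num

lemma E4_differentiableOn : DifferentiableOn ℂ E4 {z | 0 < z.im} := by
  have h := UpperHalfPlane.mdifferentiable_iff.mp (ModularFormClass.holo ModularForm.E₄)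
  refine h.congr fun z hz ↦ ?_
  lift z to UpperHalfPlane using hz
  simp [E4_coe]

lemma E4_add_one (z : ℂ) : E4 (z + 1) = E4 z := by
  have : qq (z + 1) = qq z := by
    rw [qq, qq, mul_add, mul_one, Complex.exp_add, Complex.exp_two_pi_mul_I, mul_one]
  rw [E4, E4, this]

lemma E4_neg_inv {z : ℂ} (hz : 0 < z.im) : E4 (-z⁻¹) = z ^ 4 * E4 z := by
  lift z to UpperHalfPlane using hz
  have : SlashInvariantFormClass (ModularForm (MonoidHom.range
      (Matrix.SpecialLinearGroup.mapGL (n := Fin 2) (R := ℤ) ℝ)) 4)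
      (CongruenceSubgroup.Gamma 1) 4 := CongruenceSubgroup.Gamma_one_coe_eq_SL ▸ inferInstance
  have h := SlashInvariantForm.slash_action_eqn_SL'' ModularForm.E₄
    (CongruenceSubgroup.mem_Gamma_one ModularGroup.S) z
  rw [UpperHalfPlane.modular_S_smul, ModularGroup.denom_S, ← E4_coe, ← E4_coe] at h
  rw [← inv_neg]
  exact_mod_cast h

lemma E4_neg_inv_add_one {z : ℂ} (hz : 0 < z.im) :
    E4 (-(z + 1)⁻¹) = (z + 1) ^ 4 * E4 z := by
  rw [E4_neg_inv (by simpa using hz), E4_add_one]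

lemma add_one_ne_zero_of_im_pos {z : ℂ} (hz : 0 < z.im) : z + 1 ≠ 0 := by
  intro h
  have := congrArg Complex.im h
  simp at this
  exact hz.ne' this

lemma im_neg_inv_add_one_pos {z : ℂ} (hz : 0 < z.im) : 0 < (-(z + 1)⁻¹).im := by
  rw [Complex.neg_im, Complex.inv_im, neg_div, neg_neg]
  exact div_pos (by simpa using hz) (Complex.normSq_pos.mpr (add_one_ne_zero_of_im_pos hz))

lemma hasDerivAt_neg_inv_add_one {z : ℂ} (hz : 0 < z.im) :
    HasDerivAt (fun w : ℂ ↦ -(w + 1)⁻¹) (1 / (z + 1) ^ 2) z := by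
  convert! (((hasDerivAt_id z).add_const 1).fun_inv (add_one_ne_zero_of_im_pos hz)).fun_neg using 1
  simp [neg_div]

lemma deriv_E4_neg_inv_add_one {z : ℂ} (hz : 0 < z.im) :
    deriv E4 (-(z + 1)⁻¹) = 4 * (z + 1) ^ 5 * E4 z + (z + 1) ^ 6 * deriv E4 z := by
  have hd {w : ℂ} (hw : 0 < w.im) : HasDerivAt E4 (deriv E4 w) w :=
    (E4_differentiableOn.differentiableAt (isOpen_im_pos.mem_nhds hw)).hasDerivAt
  have h1 := (hd (im_neg_inv_add_one_pos hz)).comp z (hasDerivAt_neg_inv_add_one hz)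
  have h2 := (((hasDerivAt_id z).add_const 1).fun_pow 4).fun_mul (hd hz)
  have h3 : E4 ∘ (fun w : ℂ ↦ -(w + 1)⁻¹) =ᶠ[𝓝 z] fun w ↦ (id w + 1) ^ 4 * E4 w :=
    (isOpen_im_pos.mem_nhds hz |> Filter.eventually_of_mem) fun w hw ↦ E4_neg_inv_add_one hw
  have h4 := h1.unique (h2.congr_of_eventuallyEq h3)
  have hne := add_one_ne_zero_of_im_pos hz
  rw [mul_one_div, div_eq_iff (pow_ne_zero 2 hne)] at h4
  simp only [id] at h4
  push_cast at h4
  linear_combination h4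

lemma deriv_deriv_E4_neg_inv_add_one {z : ℂ} (hz : 0 < z.im) :
    deriv (deriv E4) (-(z + 1)⁻¹) = 20 * (z + 1) ^ 6 * E4 z + 10 * (z + 1) ^ 7 * deriv E4 z +
      (z + 1) ^ 8 * deriv (deriv E4) z := by
  have hd {w : ℂ} (hw : 0 < w.im) : HasDerivAt E4 (deriv E4 w) w :=
    (E4_differentiableOn.differentiableAt (isOpen_im_pos.mem_nhds hw)).hasDerivAt
  have hdd {w : ℂ} (hw : 0 < w.im) : HasDerivAt (deriv E4) (deriv (deriv E4) w) w :=
    ((E4_differentiableOn.deriv isOpen_im_pos).differentiableAt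
      (isOpen_im_pos.mem_nhds hw)).hasDerivAt
  have h1 := (hdd (im_neg_inv_add_one_pos hz)).comp z (hasDerivAt_neg_inv_add_one hz)
  have hp (n : ℕ) := ((hasDerivAt_id z).add_const 1).fun_pow n
  have h2 := (((hp 5).const_mul 4).fun_mul (hd hz)).fun_add ((hp 6).fun_mul (hdd hz))
  have h3 : deriv E4 ∘ (fun w : ℂ ↦ -(w + 1)⁻¹) =ᶠ[𝓝 z]
      fun w ↦ 4 * (id w + 1) ^ 5 * E4 w + (id w + 1) ^ 6 * deriv E4 w :=
    (isOpen_im_pos.mem_nhds hz |> Filter.eventually_of_mem) fun w hw ↦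
      deriv_E4_neg_inv_add_one hw
  have h4 := h1.unique (h2.congr_of_eventuallyEq h3)
  have hne := add_one_ne_zero_of_im_pos hz
  rw [mul_one_div, div_eq_iff (pow_ne_zero 2 hne)] at h4
  simp only [id] at h4
  push_cast at h4
  linear_combination h4

lemma rho_eq : rho = -1 / 2 + (√3 / 2 : ℝ) * I := by
  have h : 2 * Real.pi / 3 = Real.pi - Real.pi / 3 := by ring
  have : rho = cexp ((2 * Real.pi / 3 : ℝ) * I) := by
    rw [rho]
    push_cast
    ring_nf
  rw [this, Complex.exp_mul_I, ← Complex.ofReal_cos, ← Complex.ofReal_sin, h, Real.cos_pi_sub,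
    Real.sin_pi_sub, Real.cos_pi_div_three, Real.sin_pi_div_three]
  push_cast
  ring

lemma rho_im : rho.im = √3 / 2 := by
  simp [rho_eq]

lemma rho_im_pos : 0 < rho.im := by
  rw [rho_im]
  positivity

lemma rho_sq : rho ^ 2 + rho + 1 = 0 := by
  have h : ((√3 : ℝ) : ℂ) ^ 2 = 3 := by
    exact_mod_cast Real.sq_sqrt (by norm_num : (0 : ℝ) ≤ 3)
  rw [rho_eq]
  push_cast
  linear_combination (√3 : ℂ) ^ 2 / 4 * I_sq - h / 4

lemma neg_inv_rho_add_one : -(rho + 1)⁻¹ = rho := by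
  have := add_one_ne_zero_of_im_pos rho_im_pos
  field_simp
  linear_combination -rho_sq

lemma one_sub_rho_ne_zero : 1 - rho ≠ 0 := by
  intro h
  have := congrArg Complex.im h
  simp [rho_im] at this

lemma norm_qq_rho_lt : ‖qq rho‖ < 1 / 128 := by
  have h1 : (2 * Real.pi * I * rho).re = -(Real.pi * √3) := by
    simp [rho_im]
    ring
  have h3 : (1.7 : ℝ) < √3 := Real.lt_sqrt_of_sq_lt (by norm_num)
  have h5 : (5 : ℝ) ≤ Real.pi * √3 := by nlinarith [Real.pi_gt_three]
  have h6 : (128 : ℝ) < Real.exp 5 := by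
    have := Real.exp_one_gt_d9
    calc (128 : ℝ) < 2.7 ^ 5 := by norm_num
      _ ≤ Real.exp 1 ^ 5 := by gcongr; linarith
      _ = Real.exp 5 := by rw [← Real.exp_nat_mul]; norm_num
  rw [qq, Complex.norm_exp, h1, Real.exp_neg, one_div]
  exact inv_strictAnti₀ (by norm_num) (h6.trans_le (Real.exp_le_exp.mpr h5))

/-- Coefficient bound for the derivative of the series `∑ σ₃(n) qⁿ`. -/
lemma norm_deriv_sigma_three_term_le (n : ℕ) {q : ℂ} (hq : ‖q‖ < 1 / 128) :
    ‖(∑ d ∈ (n + 1).divisors, (d : ℂ) ^ 3) * ((n + 1 : ℕ) * q ^ n)‖ ≤ (1 / 4) ^ n := by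
  have h1 : (∑ d ∈ (n + 1).divisors, (d : ℂ) ^ 3) =
      ((ArithmeticFunction.sigma 3 (n + 1) : ℕ) : ℂ) := by
    simp [ArithmeticFunction.sigma_apply]
  have h2 : ArithmeticFunction.sigma 3 (n + 1) * (n + 1) ≤ 32 ^ n :=
    calc _ ≤ (n + 1) ^ (3 + 1) * (n + 1) :=
          Nat.mul_le_mul_right _ (ArithmeticFunction.sigma_le_pow_succ 3 (n + 1))
      _ = (n + 1) ^ 5 := by ring
      _ ≤ (2 ^ n) ^ 5 := Nat.pow_le_pow_left Nat.lt_two_pow_self 5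
      _ = 32 ^ n := by rw [← pow_mul, mul_comm, pow_mul]; norm_num
  rw [h1, ← mul_assoc, ← Nat.cast_mul, norm_mul, Complex.norm_natCast, norm_pow]
  calc _ ≤ (32 : ℝ) ^ n * (1 / 128) ^ n := by
        gcongr
        exact_mod_cast h2
    _ = (1 / 4) ^ n := by rw [← mul_pow]; norm_num

lemma hasDerivAt_sigma_three_series {q : ℂ} (hq : ‖q‖ < 1 / 128) :
    HasDerivAt (fun z : ℂ ↦ ∑' n : ℕ, (∑ d ∈ (n + 1).divisors, (d : ℂ) ^ 3) * z ^ (n + 1))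
      (∑' n : ℕ, (∑ d ∈ (n + 1).divisors, (d : ℂ) ^ 3) * ((n + 1 : ℕ) * q ^ n)) q := by
  refine hasDerivAt_tsum_of_isPreconnected
    (g' := fun (n : ℕ) (y : ℂ) ↦ (∑ d ∈ (n + 1).divisors, (d : ℂ) ^ 3) * ((n + 1 : ℕ) * y ^ n)) (t := Metric.ball 0 (1 / 128)) (y₀ := 0)
    (summable_geometric_of_lt_one (r := 1 / 4) (by norm_num) (by norm_num)) Metric.isOpen_ball
    (convex_ball _ _).isPreconnected (fun n y _ ↦ ?_)
    (fun n y hy ↦ norm_deriv_sigma_three_term_le n (by simpa using hy)) (by simp)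
    (by simp) (by simpa using hq)
  simpa using (hasDerivAt_pow (n + 1) y).const_mul (∑ d ∈ (n + 1).divisors, (d : ℂ) ^ 3)

lemma deriv_sigma_three_series_ne_zero {q : ℂ} (hq : ‖q‖ < 1 / 128) :
    ∑' n : ℕ, (∑ d ∈ (n + 1).divisors, (d : ℂ) ^ 3) * ((n + 1 : ℕ) * q ^ n) ≠ 0 := by
  have hg : Summable fun n : ℕ ↦ (1 / 4 : ℝ) ^ n :=
    summable_geometric_of_lt_one (by norm_num) (by norm_num)
  have hs := Summable.of_norm_bounded hg fun n ↦ norm_deriv_sigma_three_term_le n hq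
  have ht : HasSum (fun n : ℕ ↦ (1 / 4 : ℝ) ^ (n + 1)) (1 / 3) := by
    convert! (hasSum_geometric_of_lt_one (r := (1 / 4 : ℝ)) (by norm_num) (by norm_num)).mul_right
      (1 / 4) using 1
    norm_num
  have hb := tsum_of_norm_bounded ht fun n ↦ norm_deriv_sigma_three_term_le (n + 1) hq
  rw [hs.tsum_eq_zero_add]
  intro h
  rw [← neg_eq_of_add_eq_zero_right h] at hb
  norm_num at hb

lemma deriv_E4_rho_ne_zero : deriv E4 rho ≠ 0 := by
  have hq : HasDerivAt qq (qq rho * (2 * Real.pi * I)) rho := by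
    convert! ((hasDerivAt_id rho).const_mul (2 * Real.pi * I)).cexp using 1
    simp [qq]
  have h := (((hasDerivAt_sigma_three_series norm_qq_rho_lt).comp rho hq).const_mul
    240).const_add 1
  have h' : HasDerivAt E4 _ rho := h
  rw [h'.deriv]
  have := deriv_sigma_three_series_ne_zero norm_qq_rho_lt
  have hexp : qq rho ≠ 0 := Complex.exp_ne_zero _
  exact mul_ne_zero (by norm_num) (mul_ne_zero this
    (mul_ne_zero hexp Complex.two_pi_I_ne_zero))

/-- `E₄` has a simple zero at `ρ`, and `E₄''(ρ) = 10·(1+ρ)/(1−ρ)·E₄'(ρ)`. -/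
theorem E4_derivatives_at_rho :
    E4 rho = 0 ∧
    deriv E4 rho ≠ 0 ∧
    iteratedDeriv 2 E4 rho = 10 * ((1 + rho) / (1 - rho)) * deriv E4 rho := by
  have hr := rho_sq
  have h1 := one_sub_rho_ne_zero
  have hfix := E4_neg_inv_add_one rho_im_pos
  have hfix'' := deriv_deriv_E4_neg_inv_add_one rho_im_pos
  rw [neg_inv_rho_add_one] at hfix hfix''
  have hcube : rho ^ 3 = 1 := by linear_combination (rho - 1) * hr
  have hr1 : rho + 1 = -rho ^ 2 := by linear_combination hr
  have hρ : rho ≠ 0 := fun h ↦ by simp [h] at hr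
  have hp4 : (rho + 1) ^ 4 = rho ^ 2 := by
    rw [hr1]
    linear_combination rho ^ 2 * (rho ^ 3 + 1) * hcube
  have hp7 : (rho + 1) ^ 7 = -rho ^ 2 := by
    rw [hr1]
    linear_combination -rho ^ 2 * (rho ^ 9 + rho ^ 6 + rho ^ 3 + 1) * hcube
  have hp8 : (rho + 1) ^ 8 = rho := by
    rw [hr1]
    linear_combination rho * (rho ^ 12 + rho ^ 9 + rho ^ 6 + rho ^ 3 + 1) * hcube
  have hzero : E4 rho = 0 := by
    have : (1 - rho) * (1 + rho) * E4 rho = 0 := by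
      rw [hp4] at hfix
      linear_combination hfix
    have h2 : 1 + rho ≠ 0 := by rw [add_comm, hr1]; simpa using hρ
    simpa [h1, h2] using this
  refine ⟨hzero, deriv_E4_rho_ne_zero, ?_⟩
  rw [hzero, hp7, hp8] at hfix''
  rw [iteratedDeriv_succ, iteratedDeriv_one]
  field_simp
  linear_combination hfix'' - 10 * deriv E4 rho * hr
end
end

section
/- For every τ in the upper half-plane with J(τ) ≠ 0 and J(τ) ≠ 1 (so that J'(τ) ≠ 0), the logarithmic derivative of the Dedekind eta function satisfies 24 η'(τ)/η(τ) = 6 J''(τ)/J'(τ) − 4 J'(τ)/J(τ) − 3 J'(τ)/(J(τ) − 1). -/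
open Complex Filter Topology

noncomputable section

section

open UpperHalfPlane hiding J I
open ModularForm ModularFormClass MatrixGroups
open scoped Manifold Derivative

/-- A function on `ℍ` given by a `q`-expansion tends to its constant coefficient at `i∞`. -/
lemma tendsto_atImInfty_of_hasSum_qExpansion {f : ℍ → ℂ} {c : ℕ → ℂ}
    (hf : ∀ τ : ℍ, HasSum (fun m ↦ c m • Function.Periodic.qParam 1 τ ^ m) (f τ)) :
    Tendsto f atImInfty (𝓝 (c 0)) := by
  set q : ℍ → ℂ := fun τ ↦ Function.Periodic.qParam 1 τ with hq
  have hq0 (τ : ℍ) : q τ ≠ 0 := Function.Periodic.qParam_ne_zero _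
  have hg (τ : ℍ) : HasSum (fun m ↦ c (m + 1) • q τ ^ m) ((q τ)⁻¹ * (f τ - c 0)) := by
    have h := ((hasSum_nat_add_iff' 1).mpr (hf τ)).mul_left (q τ)⁻¹
    convert! h using 1
    · ext m
      have := hq0 τ
      simp only [hq, smul_eq_mul] at this ⊢
      field_simp
      ring
    · simp
  have hlim := (isBoundedAtImInfty_of_hasSum_qExpansion one_pos hg).mul_zeroAtFilter
    (g := q) (qParam_tendsto_atImInfty one_pos)
  have : f = fun τ ↦ ((q τ)⁻¹ * (f τ - c 0)) * q τ + c 0 := by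
    ext τ
    field_simp [hq0 τ]
    ring
  rw [this]
  simpa using Tendsto.add_const (c 0) hlim

lemma tendsto_E2_atImInfty : Tendsto EisensteinSeries.E2 atImInfty (𝓝 1) := by
  simpa using tendsto_atImInfty_of_hasSum_qExpansion
    (f := EisensteinSeries.E2)
    (c := fun m ↦ if m = 0 then 1 else -24 * ArithmeticFunction.sigma 1 m)
    fun τ ↦ by simpa [Function.Periodic.qParam] using EisensteinSeries.hasSum_qExpansion_E2 (z := τ)

lemma ModularForm.tendsto_atImInfty {k : ℤ} (f : ModularForm 𝒮ℒ k) :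
    Tendsto f atImInfty (𝓝 ((qExpansion 1 f).coeff 0)) :=
  tendsto_atImInfty_of_hasSum_qExpansion fun τ ↦
    UpperHalfPlane.hasSum_qExpansion one_pos
      (SlashInvariantFormClass.periodic_comp_ofComplex f one_mem_strictPeriods_SL) f.holo'
      (ModularFormClass.bdd_at_infty f) τ

lemma ModularForm.tendsto_normalizedDeriv_atImInfty {k : ℤ} (f : ModularForm 𝒮ℒ k) :
    Tendsto (D f) atImInfty (𝓝 0) := by
  set F := cuspFunction 1 f
  have hF0 : AnalyticAt ℂ F 0 :=
    ModularFormClass.analyticAt_cuspFunction_zero f one_pos one_mem_strictPeriods_SL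
  have hD (z : ℍ) : D f z =
      deriv F (Function.Periodic.qParam 1 z) * Function.Periodic.qParam 1 z := by
    have hFd : DifferentiableAt ℂ F (Function.Periodic.qParam 1 z) :=
      ModularFormClass.differentiableAt_cuspFunction f one_pos one_mem_strictPeriods_SL
        (Function.Periodic.norm_qParam_lt_one one_pos z.im_pos)
    have hq : HasDerivAt (Function.Periodic.qParam 1)
        (Function.Periodic.qParam 1 z * (2 * Real.pi * Complex.I)) z := by
      have : Function.Periodic.qParam 1 = fun w ↦ cexp (2 * Real.pi * Complex.I * w) := by
        ext w
        simp [Function.Periodic.qParam]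
      simpa [this] using
        ((hasDerivAt_id (z : ℂ)).const_mul (2 * Real.pi * Complex.I)).cexp
    have heq : f ∘ ofComplex =ᶠ[𝓝 (z : ℂ)] F ∘ Function.Periodic.qParam 1 := by
      filter_upwards [isOpen_upperHalfPlaneSet.mem_nhds z.im_pos] with w hw
      have := SlashInvariantFormClass.eq_cuspFunction f ⟨w, hw⟩ one_mem_strictPeriods_SL one_ne_zero
      simpa [ofComplex_apply_of_im_pos hw] using this.symm
    rw [Derivative.normalizedDerivOfComplex, heq.deriv_eq, (hFd.hasDerivAt.comp _ hq).deriv]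
    have := two_pi_I_ne_zero
    field_simp
  have hq := qParam_tendsto_atImInfty one_pos
  have := (hF0.deriv.continuousAt.tendsto.comp hq).mul hq
  rw [mul_zero] at this
  exact this.congr fun z ↦ (hD z).symm

lemma ModularForm.tendsto_serreDerivative_atImInfty {k : ℤ} (f : ModularForm 𝒮ℒ k) :
    Tendsto (Derivative.serreDerivative k f) atImInfty
      (𝓝 (-(k * 12⁻¹ * (qExpansion 1 f).coeff 0))) := by
  have := f.tendsto_normalizedDeriv_atImInfty.sub
    ((tendsto_E2_atImInfty.const_mul (k * 12⁻¹ : ℂ)).mul f.tendsto_atImInfty)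
  simpa [-PowerSeries.coeff_zero_eq_constantCoeff] using this

/-- The Serre derivative of a level one modular form, as a modular form. -/
def serreDerivativeForm {k : ℤ} (f : ModularForm 𝒮ℒ k) : ModularForm 𝒮ℒ (k + 2) where
  toFun := Derivative.serreDerivative k f
  slash_action_eq' A hA := by
    obtain ⟨A, rfl⟩ := hA
    exact Derivative.serreDerivative_slash_invariant f.holo'
      (SlashInvariantFormClass.slash_action_eq f _ ⟨A, rfl⟩)
  holo' := Derivative.serreDerivative_mdifferentiable _ f.holo'
  bdd_at_cusps' hc := by
    rw [Subgroup.IsArithmetic.isCusp_iff_isCusp_SL2Z] at hc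
    rw [OnePoint.isBoundedAt_iff_forall_SL2Z hc]
    intro γ _
    have h := Derivative.serreDerivative_slash_invariant f.holo'
      (SlashInvariantFormClass.slash_action_eq f _ ⟨γ, rfl⟩)
    refine Eq.subst (motive := IsBoundedAtImInfty) h.symm ?_
    exact f.tendsto_serreDerivative_atImInfty.isBigO_one ℝ

/-- A level one modular form of weight less than `12` vanishing at `i∞` is zero. -/
lemma ModularForm.eq_zero_of_tendsto_atImInfty {k : ℤ} (hk : k.toNat < 12) (f : ModularForm 𝒮ℒ k)
    (hf : Tendsto f atImInfty (𝓝 0)) : f = 0 := by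
  apply sturm_bound_levelOne
  rw [Nat.div_eq_of_lt hk, Nat.cast_zero, pos_iff_ne_zero,
    PowerSeries.order_ne_zero_iff_constCoeff_eq_zero]
  rw [← PowerSeries.coeff_zero_eq_constantCoeff_apply]
  exact tendsto_nhds_unique f.tendsto_atImInfty hf

lemma tendsto_E₄ : Tendsto E₄ atImInfty (𝓝 1) := by
  simpa [-PowerSeries.coeff_zero_eq_constantCoeff,
    EisensteinSeries.E_qExpansion_coeff_zero _ ⟨2, rfl⟩] using E₄.tendsto_atImInfty

lemma tendsto_E₆ : Tendsto E₆ atImInfty (𝓝 1) := by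
  simpa [-PowerSeries.coeff_zero_eq_constantCoeff,
    EisensteinSeries.E_qExpansion_coeff_zero _ ⟨3, rfl⟩] using E₆.tendsto_atImInfty

/-- If `k + 2 < 12`, a modular form with constant term `1` has Serre derivative
`-k / 12` times any weight `k + 2` modular form with constant term `1`. -/
lemma serreDerivative_eq_mul {k l : ℤ} (hl : k + 2 = l) (hl' : l.toNat < 12)
    (f : ModularForm 𝒮ℒ k) (g : ModularForm 𝒮ℒ l) (hf : Tendsto f atImInfty (𝓝 1)) (hg : Tendsto g atImInfty (𝓝 1))
    (z : ℍ) : Derivative.serreDerivative k f z = -(k / 12) * g z := by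
  subst hl
  have h : serreDerivativeForm f + (k / 12 : ℂ) • g = 0 := by
    refine ModularForm.eq_zero_of_tendsto_atImInfty hl' _ ?_
    have := f.tendsto_serreDerivative_atImInfty.add (hg.const_mul (k / 12 : ℂ))
    rw [tendsto_nhds_unique f.tendsto_atImInfty hf] at this
    rwa [show -((k : ℂ) * 12⁻¹ * 1) + k / 12 * 1 = 0 by ring] at this
  have hz : Derivative.serreDerivative k f z + k / 12 * g z = 0 := DFunLike.congr_fun h z
  linear_combination hz

/-- Ramanujan's identity for `E₄`. -/
lemma normalizedDeriv_E₄ (z : ℍ) :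
    D E₄ z = (EisensteinSeries.E2 z * E₄ z - E₆ z) / 3 := by
  have h := serreDerivative_eq_mul (by norm_num) (by decide) E₄ E₆ tendsto_E₄ tendsto_E₆ z
  rw [Derivative.serreDerivative_apply] at h
  push_cast at h
  linear_combination h

/-- Ramanujan's identity for `E₆`. -/
lemma normalizedDeriv_E₆ (z : ℍ) :
    D E₆ z = (EisensteinSeries.E2 z * E₆ z - E₄ z ^ 2) / 2 := by
  have h := serreDerivative_eq_mul (by norm_num) (by decide) E₆ (E₄.mul E₄) tendsto_E₆
    (by simpa using! tendsto_E₄.mul tendsto_E₄) z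
  rw [Derivative.serreDerivative_apply, show (E₄.mul E₄) z = E₄ z * E₄ z from rfl] at h
  push_cast at h
  linear_combination h

lemma qq_eq (z : ℍ) : qq z = cexp (2 * Real.pi * Complex.I * z) := rfl

lemma E4_eq_E₄ (z : ℍ) : E4 z = E₄ z := by
  rw [E4, EisensteinSeries.q_expansion_bernoulli _ ⟨2, rfl⟩,
    tsum_pnat_eq_tsum_succ (f := fun n ↦
      (ArithmeticFunction.sigma (4 - 1) n : ℂ) * cexp (2 * Real.pi * Complex.I * z) ^ (n : ℤ))]
  norm_num [show bernoulli 4 = -1 / 30 by decide +kernel, ArithmeticFunction.sigma_apply, qq_eq]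
  norm_cast

lemma E6_eq_E₆ (z : ℍ) : E6 z = E₆ z := by
  rw [E6, EisensteinSeries.q_expansion_bernoulli _ ⟨3, rfl⟩,
    tsum_pnat_eq_tsum_succ (f := fun n ↦
      (ArithmeticFunction.sigma (6 - 1) n : ℂ) * cexp (2 * Real.pi * Complex.I * z) ^ (n : ℤ))]
  norm_num [show bernoulli 6 = 1 / 42 by decide +kernel, ArithmeticFunction.sigma_apply, qq_eq]
  norm_cast

lemma dedekindEta_eq_eta : dedekindEta = η := by
  ext z
  simp only [dedekindEta, ModularForm.eta, eta_q_eq_pow, qq, Function.Periodic.qParam]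
  congr 2
  push_cast
  ring

lemma E4_cube_sub_E6_sq_ne_zero (z : ℍ) : E4 z ^ 3 - E6 z ^ 2 ≠ 0 := by
  have h := discriminant_ne_zero z
  rw [discriminant_eq_E₄_cube_sub_E₆_sq, ← E4_eq_E₄, ← E6_eq_E₆] at h
  exact (div_ne_zero_iff.mp h).1

lemma hasDerivAt_of_eqOn {F : ℂ → ℂ} {f : ℍ → ℂ} (hf : MDiff f) (h : ∀ z : ℍ, F z = f z) (z : ℍ) :
    HasDerivAt F (2 * Real.pi * Complex.I * D f z) z := by
  have heq : F =ᶠ[𝓝 (z : ℂ)] f ∘ ofComplex := by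
    filter_upwards [isOpen_upperHalfPlaneSet.mem_nhds z.im_pos] with w hw
    simpa [ofComplex_apply_of_im_pos hw] using h ⟨w, hw⟩
  refine HasDerivAt.congr_of_eventuallyEq ?_ heq
  rw [Derivative.normalizedDerivOfComplex, mul_inv_cancel_left₀ two_pi_I_ne_zero]
  exact (mdifferentiableAt_iff.mp (hf z)).hasDerivAt

lemma hasDerivAt_E4 (z : ℍ) : HasDerivAt E4
    (2 * Real.pi * Complex.I * ((EisensteinSeries.E2 z * E4 z - E6 z) / 3)) z := by
  rw [E4_eq_E₄, E6_eq_E₆, ← normalizedDeriv_E₄]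
  exact hasDerivAt_of_eqOn E₄.holo' E4_eq_E₄ z

lemma hasDerivAt_E6 (z : ℍ) : HasDerivAt E6
    (2 * Real.pi * Complex.I * ((EisensteinSeries.E2 z * E6 z - E4 z ^ 2) / 2)) z := by
  rw [E4_eq_E₄, E6_eq_E₆, ← normalizedDeriv_E₆]
  exact hasDerivAt_of_eqOn E₆.holo' E6_eq_E₆ z

lemma hasDerivAt_E4_cube_sub_E6_sq (z : ℍ) : HasDerivAt (fun w ↦ E4 w ^ 3 - E6 w ^ 2)
    (2 * Real.pi * Complex.I * (EisensteinSeries.E2 z * (E4 z ^ 3 - E6 z ^ 2))) z := by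
  convert! ((hasDerivAt_E4 z).fun_pow 3).fun_sub ((hasDerivAt_E6 z).fun_pow 2) using 1
  push_cast
  ring

lemma hasDerivAt_J (z : ℍ) : HasDerivAt J
    (-(2 * Real.pi * Complex.I) * (E4 z ^ 2 * E6 z / (E4 z ^ 3 - E6 z ^ 2))) z := by
  have hΔ := E4_cube_sub_E6_sq_ne_zero z
  convert! ((hasDerivAt_E4 z).fun_pow 3).fun_div (hasDerivAt_E4_cube_sub_E6_sq z) hΔ using 1
  field_simp
  push_cast
  ring

lemma hasDerivAt_deriv_J (z : ℍ) : HasDerivAt (deriv J)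
    ((2 * Real.pi * Complex.I) ^ 2 * (E4 z * (-EisensteinSeries.E2 z * E4 z * E6 z + 4 * E6 z ^ 2 +
      3 * E4 z ^ 3) / (6 * (E4 z ^ 3 - E6 z ^ 2)))) z := by
  have hΔ := E4_cube_sub_E6_sq_ne_zero z
  have heq : deriv J =ᶠ[𝓝 (z : ℂ)]
      fun w ↦ -(2 * Real.pi * Complex.I) * (E4 w ^ 2 * E6 w / (E4 w ^ 3 - E6 w ^ 2)) := by
    filter_upwards [isOpen_upperHalfPlaneSet.mem_nhds z.im_pos] with w hw
    exact (hasDerivAt_J ⟨w, hw⟩).deriv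
  refine HasDerivAt.congr_of_eventuallyEq ?_ heq
  convert! ((((hasDerivAt_E4 z).fun_pow 2).fun_mul (hasDerivAt_E6 z)).fun_div
    (hasDerivAt_E4_cube_sub_E6_sq z) hΔ).const_mul (-(2 * Real.pi * Complex.I)) using 1
  field_simp
  push_cast
  ring

end

/-- For `τ ∈ ℍ` with `J(τ) ∉ {0,1}`, `J'(τ) ≠ 0` and
`24 η'/η = 6 J''/J' − 4 J'/J − 3 J'/(J−1)`. -/
theorem eta_log_deriv_formula (τ : ℂ) (hτ : 0 < τ.im) (h0 : J τ ≠ 0) (h1 : J τ ≠ 1) :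
    deriv J τ ≠ 0 ∧
    24 * (deriv dedekindEta τ / dedekindEta τ) =
      6 * (iteratedDeriv 2 J τ / deriv J τ) - 4 * (deriv J τ / J τ) -
        3 * (deriv J τ / (J τ - 1)) := by
  lift τ to UpperHalfPlane using hτ
  have hΔ := E4_cube_sub_E6_sq_ne_zero τ
  have h4 : E4 τ ≠ 0 := fun h ↦ h0 (by simp [J, h])
  have hJ1 : J τ - 1 = E6 τ ^ 2 / (E4 τ ^ 3 - E6 τ ^ 2) := by
    rw [J]
    field_simp
    ring
  have h6 : E6 τ ≠ 0 := fun h ↦ h1 (sub_eq_zero.mp (by simp [hJ1, h]))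
  have hη : deriv dedekindEta τ / dedekindEta τ =
      Real.pi * Complex.I / 12 * EisensteinSeries.E2 τ := by
    rw [dedekindEta_eq_eta]
    exact ModularForm.logDeriv_eta_eq_E2 τ
  rw [hη, iteratedDeriv_succ, iteratedDeriv_one, (hasDerivAt_deriv_J τ).deriv,
    (hasDerivAt_J τ).deriv, hJ1, J]
  refine ⟨by simp [hΔ, h4, h6], ?_⟩
  field_simp
  ring
end
end
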